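/- Let V be a real vector space with finrank V = 2, Q a quadratic form on V, and A, B, C, X elements of the Clifford algebra Cl(Q). If A·X − X·B = C, then D·X = A·C − C·B̄, where B̄ := involute (reverse B) and D := A² − A·(B + B̄) + B·B̄. -/

import Mathlib

open CliffordAlgebra

/-!
The subalgebra generated by two vectors `u`, `v` consists of the elements `B = x + w` with
`x = a + d u v` and `w` in the span of `u` and `v`. Three vectors `u`, `v`, `w` of a plane satisfy
`u v w = w v u`, because their product has no component of grade three, so `x w = w x̄`. Hence
`B B̄ = (x + w)(x̄ - w) = x x̄ - w²`, and both `B + B̄ = x + x̄` and `B B̄` are scalars. As scalars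
commute with `X`, they can be moved past it in `A (A X - X B) - (A X - X B) B̄`.
-/

theorem quadratic_mul_eq_of_sylvester {S : Type*} [Ring S] {A B B' C X : S}
    (hadd : Commute (B + B') X) (hmul : Commute (B * B') X) (h : A * X - X * B = C) :
    (A ^ 2 - A * (B + B') + B * B') * X = A * C - C * B' :=
  calc
    (A ^ 2 - A * (B + B') + B * B') * X
        = A ^ 2 * X - A * ((B + B') * X) + B * B' * X := by noncomm_ring
    _ = A ^ 2 * X - A * (X * (B + B')) + X * (B * B') := by rw [hadd.eq, hmul.eq]
    _ = A * (A * X - X * B) - (A * X - X * B) * B' := by noncomm_ring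
    _ = A * C - C * B' := by rw [h]

theorem exists_span_pair_eq_top_of_finrank_eq_two {R M : Type*} [Ring R] [StrongRankCondition R]
    [AddCommGroup M] [Module R M] [Module.Free R M] (h : Module.finrank R M = 2) :
    ∃ u v : M, Submodule.span R {u, v} = ⊤ := by
  have := Module.finite_of_finrank_pos (R := R) (M := M) (by lia)
  let basis := Module.finBasisOfFinrankEq R M h
  have hrange : Set.range basis = {basis 0, basis 1} := by
    ext
    simp [Fin.exists_fin_two, eq_comm]
  exact ⟨basis 0, basis 1, hrange ▸ basis.span_eq⟩

section

variable {R M : Type*} [CommRing R] [AddCommGroup M] [Module R M] {Q : QuadraticForm R M}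
  {u v w : M}

theorem adjoin_ι_pair_eq_top (huv : Submodule.span R {u, v} = ⊤) :
    Algebra.adjoin R {ι Q u, ι Q v} = ⊤ := by
  rw [← Set.image_pair, ← Algebra.adjoin_span, Submodule.span_image, huv, Submodule.map_top,
    LinearMap.coe_range, adjoin_range_ι]

theorem exists_ι_mul_eq_scalar_add_bivector_add_ι {m : M} (hm : m ∈ ({u, v} : Set M))
    (hw : w ∈ Submodule.span R {u, v}) (a d : R) :
    ∃ a' d' : R, ∃ w' ∈ Submodule.span R {u, v},
      ι Q m * (algebraMap R _ a + d • (ι Q u * ι Q v) + ι Q w) =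
        algebraMap R _ a' + d' • (ι Q u * ι Q v) + ι Q w' := by
  obtain ⟨b, c, rfl⟩ := Submodule.mem_span_pair.mp hw
  rcases hm with rfl | rfl
  · refine ⟨b * Q m, c, _, Submodule.mem_span_pair.mpr ⟨a, d * Q m, rfl⟩, ?_⟩
    simp only [mul_add, map_add, map_smul, mul_smul_comm, ← mul_assoc, ι_sq_scalar,
      Algebra.algebraMap_eq_smul_one, smul_mul_assoc, mul_one, one_mul]
    module
  · have hmum : ι Q m * (ι Q u * ι Q m) =
        QuadraticMap.polar Q m u • ι Q m - Q m • ι Q u := by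
      rw [← mul_assoc, ι_mul_ι_mul_ι, map_sub, map_smul, map_smul]
    refine ⟨b * QuadraticMap.polar Q m u + c * Q m, -b, _, Submodule.mem_span_pair.mpr
      ⟨-(d * Q m), a + d * QuadraticMap.polar Q m u, rfl⟩, ?_⟩
    simp only [mul_add, map_add, map_smul, mul_smul_comm, hmum, ι_sq_scalar, ι_mul_ι_comm m u,
      Algebra.algebraMap_eq_smul_one, mul_one]
    module

theorem exists_eq_scalar_add_bivector_add_ι {B : CliffordAlgebra Q}
    (hB : B ∈ Algebra.adjoin R {ι Q u, ι Q v}) :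
    ∃ a d : R, ∃ w ∈ Submodule.span R {u, v},
      B = algebraMap R _ a + d • (ι Q u * ι Q v) + ι Q w := by
  rw [← Subalgebra.mem_toSubmodule, Algebra.adjoin_eq_span] at hB
  induction hB using Submodule.span_induction with
  | zero => exact ⟨0, 0, 0, zero_mem _, by simp⟩
  | add _ _ _ _ hx hy =>
    obtain ⟨a, d, w, hw, rfl⟩ := hx
    obtain ⟨a', d', w', hw', rfl⟩ := hy
    exact ⟨a + a', d + d', w + w', add_mem hw hw', by simp only [map_add]; module⟩
  | smul r _ _ hx =>
    obtain ⟨a, d, w, hw, rfl⟩ := hx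
    exact ⟨r * a, r * d, r • w, Submodule.smul_mem _ r hw, by
      simp only [Algebra.algebraMap_eq_smul_one, map_smul, smul_add, mul_smul]⟩
  | mem x hx =>
    induction hx using Submonoid.closure_induction_left with
    | one => exact ⟨1, 0, 0, zero_mem _, by simp⟩
    | mul_left g hg _ _ hy =>
      obtain ⟨a, d, w, hw, rfl⟩ := hy
      rw [← Set.image_pair] at hg
      obtain ⟨m, hm, rfl⟩ := hg
      exact exists_ι_mul_eq_scalar_add_bivector_add_ι hm hw a d

theorem star_scalar_add_bivector_add_ι (a d : R) (w : M) :
    star (algebraMap R _ a + d • (ι Q u * ι Q v) + ι Q w) =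
      algebraMap R _ a + d • (ι Q v * ι Q u) - ι Q w := by
  simp only [star_add, star_algebraMap, CliffordAlgebra.star_smul, star_mul, star_ι, neg_mul_neg,
    sub_eq_add_neg]

theorem exists_add_star_eq_algebraMap {B : CliffordAlgebra Q}
    (hB : B ∈ Algebra.adjoin R {ι Q u, ι Q v}) : ∃ t : R, B + star B = algebraMap R _ t := by
  obtain ⟨a, d, w, -, rfl⟩ := exists_eq_scalar_add_bivector_add_ι hB
  refine ⟨2 * a + d * QuadraticMap.polar Q u v, ?_⟩
  rw [star_scalar_add_bivector_add_ι, map_add, map_mul _ d, ← ι_mul_ι_add_swap,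
    ← Algebra.smul_def]
  simp only [Algebra.algebraMap_eq_smul_one]
  module

theorem ι_mul_ι_mul_ι_comm_of_mem_span_pair (hw : w ∈ Submodule.span R {u, v}) :
    ι Q u * ι Q v * ι Q w = ι Q w * ι Q v * ι Q u := by
  obtain ⟨b, c, rfl⟩ := Submodule.mem_span_pair.mp hw
  have huvv : ι Q u * ι Q v * ι Q v = ι Q v * ι Q v * ι Q u := by
    rw [mul_assoc, ι_sq_scalar, Algebra.commutes]
  simp only [map_add, map_smul, mul_add, add_mul, mul_smul_comm, smul_mul_assoc, huvv]

theorem scalar_add_bivector_mul_reverse (a d : R) :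
    (algebraMap R _ a + d • (ι Q u * ι Q v)) * (algebraMap R _ a + d • (ι Q v * ι Q u)) =
      algebraMap R _ (a ^ 2 + a * d * QuadraticMap.polar Q u v + d ^ 2 * (Q u * Q v)) := by
  have huvvu : ι Q u * ι Q v * (ι Q v * ι Q u) = algebraMap R _ (Q u * Q v) := by
    rw [mul_assoc, ← mul_assoc (ι Q v), ι_sq_scalar, Algebra.commutes, ← mul_assoc, ι_sq_scalar,
      map_mul]
  rw [map_add, map_add, map_mul _ (a * d), map_mul _ (d ^ 2), ← ι_mul_ι_add_swap, ← huvvu,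
    ← Algebra.smul_def, ← Algebra.smul_def]
  simp only [Algebra.algebraMap_eq_smul_one, add_mul, mul_add, smul_mul_assoc, mul_smul_comm,
    mul_one, one_mul]
  module

theorem exists_mul_star_eq_algebraMap {B : CliffordAlgebra Q}
    (hB : B ∈ Algebra.adjoin R {ι Q u, ι Q v}) : ∃ n : R, B * star B = algebraMap R _ n := by
  obtain ⟨a, d, w, hw, rfl⟩ := exists_eq_scalar_add_bivector_add_ι hB
  rw [star_scalar_add_bivector_add_ι]
  set x := algebraMap R (CliffordAlgebra Q) a + d • (ι Q u * ι Q v) with hx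
  set x' := algebraMap R (CliffordAlgebra Q) a + d • (ι Q v * ι Q u) with hx'
  have hxw : x * ι Q w = ι Q w * x' := by
    rw [hx, hx', add_mul, mul_add, Algebra.commutes, smul_mul_assoc, mul_smul_comm,
      ι_mul_ι_mul_ι_comm_of_mem_span_pair hw, mul_assoc]
  have hnorm : (x + ι Q w) * (x' - ι Q w) = x * x' - ι Q w * ι Q w := by
    rw [add_mul, mul_sub, mul_sub, hxw, sub_add_sub_cancel]
  exact ⟨_, by rw [hnorm, scalar_add_bivector_mul_reverse, ι_sq_scalar, ← map_sub]⟩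

theorem stmt_10_general {A B C X : CliffordAlgebra Q}
    (hB : B ∈ Algebra.adjoin R {ι Q u, ι Q v}) (h : A * X - X * B = C) :
    (A ^ 2 - A * (B + involute (reverse B)) + B * involute (reverse B)) * X =
      A * C - C * involute (reverse B) := by
  obtain ⟨t, ht⟩ := exists_add_star_eq_algebraMap hB
  obtain ⟨n, hn⟩ := exists_mul_star_eq_algebraMap hB
  rw [← star_def']
  exact quadratic_mul_eq_of_sylvester (ht ▸ Algebra.commute_algebraMap_left t X)
    (hn ▸ Algebra.commute_algebraMap_left n X) h

end

theorem stmt_10 (V : Type*) [AddCommGroup V] [Module ℝ V]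
    (hV : Module.finrank ℝ V = 2) (Q : QuadraticForm ℝ V)
    (A B C X : CliffordAlgebra Q)
    (h : A * X - X * B = C) :
    (A ^ 2 - A * (B + involute (reverse B)) + B * involute (reverse B)) * X =
      A * C - C * involute (reverse B) := by
  obtain ⟨u, v, huv⟩ := exists_span_pair_eq_top_of_finrank_eq_two hV
  exact stmt_10_general (adjoin_ι_pair_eq_top huv ▸ Algebra.mem_top) h
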